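/- Every downward closed generalised atom is expressible in TeamLTL(⩔, A¹): for every n ≥ 1, every set B ⊆ 𝒫({0,1}ⁿ) of n-ary Boolean relations that is downward closed (S ∈ B whenever S ⊆ R for some R ∈ B), and all propositional formulas α₁,…,αₙ over AP, there exists a formula ψ of TeamLTL extended with ⩔ and A¹ (without NE) such that for every team T = (t_i)_{i∈ι} and every tef τ for ι: (T,τ) ⊨ ψ if and only if { (⟦α₁⟧_{(t_i,τ(0)(i))}, …, ⟦αₙ⟧_{(t_i,τ(0)(i))}) : i ∈ ι } ∈ B. -/

import Mathlib

namespace TTS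

abbrev Trace (AP : Type) := ℕ → Set AP

def IsStutTef {ι : Type} (τ : ℕ → ι → ℕ) : Prop :=
  ∀ n i, τ n i ≤ τ (n + 1) i

def IsTef {ι : Type} (τ : ℕ → ι → ℕ) : Prop :=
  IsStutTef τ ∧ (∀ n, τ n ≠ τ (n + 1)) ∧ (∀ n i, τ (n + 1) i ≤ τ n i + 1)

def Initial {ι : Type} (τ : ℕ → ι → ℕ) : Prop := ∀ i, τ 0 i = 0

def Fair {ι : Type} (τ : ℕ → ι → ℕ) : Prop :=
  ∀ (m : ℕ) (i : ι), ∃ n, m ≤ τ n i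

def Synchronous {ι : Type} (τ : ℕ → ι → ℕ) : Prop :=
  ∀ n (i j : ι), τ n i = τ n j

def shift {ι : Type} (τ : ℕ → ι → ℕ) (k : ℕ) : ℕ → ι → ℕ := fun n => τ (n + k)

/-- TeamLTL formulas extended with Boolean disjunction ⩔, the non-emptiness
atom NE, and the universal subteam quantifier A¹. -/
inductive EFormula (AP : Type) : Type
  | atom : AP → EFormula AP
  | natom : AP → EFormula AP
  | and : EFormula AP → EFormula AP → EFormula AP
  | or : EFormula AP → EFormula AP → EFormula AP
  | bor : EFormula AP → EFormula AP → EFormula AP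
  | NE : EFormula AP
  | A1 : EFormula AP → EFormula AP
  | X : EFormula AP → EFormula AP
  | U : EFormula AP → EFormula AP → EFormula AP
  | W : EFormula AP → EFormula AP → EFormula AP

def esat {AP : Type} : {ι : Type} → (ι → Trace AP) → (ℕ → ι → ℕ) → EFormula AP → Prop
  | _, T, τ, .atom p => ∀ i, p ∈ T i (τ 0 i)
  | _, T, τ, .natom p => ∀ i, p ∉ T i (τ 0 i)
  | _, T, τ, .and φ ψ => esat T τ φ ∧ esat T τ ψ
  | ι, T, τ, .or φ ψ =>
      ∃ P : ι → Prop,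
        esat (fun i : {i // P i} => T i.1) (fun n i => τ n i.1) φ ∧
        esat (fun i : {i // ¬ P i} => T i.1) (fun n i => τ n i.1) ψ
  | _, T, τ, .bor φ ψ => esat T τ φ ∨ esat T τ ψ
  | ι, _, _, .NE => Nonempty ι
  | ι, T, τ, .A1 φ =>
      ∀ i : ι, esat (fun j : {j // j = i} => T j.1) (fun n j => τ n j.1) φ
  | _, T, τ, .X φ => esat T (shift τ 1) φ
  | _, T, τ, .U φ ψ =>
      ∃ k, esat T (shift τ k) ψ ∧ ∀ m, m < k → esat T (shift τ m) φ
  | _, T, τ, .W φ ψ =>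
      ∀ k, esat T (shift τ k) φ ∨ ∃ m, m ≤ k ∧ esat T (shift τ m) ψ

def esatE {AP ι : Type} (T : ι → Trace AP) (φ : EFormula AP) : Prop :=
  ∃ τ : ℕ → ι → ℕ, IsTef τ ∧ Initial τ ∧ esat T τ φ

def esatA {AP ι : Type} (T : ι → Trace AP) (φ : EFormula AP) : Prop :=
  ∀ τ : ℕ → ι → ℕ, IsTef τ → Initial τ → esat T τ φ

def esatS {AP ι : Type} (T : ι → Trace AP) (φ : EFormula AP) : Prop :=
  esat T (fun n _ => n) φ

/-- Plain TeamLTL formulas (negation normal form, no extended connectives). -/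
inductive Formula (AP : Type) : Type
  | atom : AP → Formula AP
  | natom : AP → Formula AP
  | and : Formula AP → Formula AP → Formula AP
  | or : Formula AP → Formula AP → Formula AP
  | X : Formula AP → Formula AP
  | U : Formula AP → Formula AP → Formula AP
  | W : Formula AP → Formula AP → Formula AP

/-- Embedding of plain TeamLTL formulas into the extended syntax. -/
def Formula.toE {AP : Type} : Formula AP → EFormula AP
  | .atom p => .atom p
  | .natom p => .natom p
  | .and φ ψ => .and φ.toE ψ.toE
  | .or φ ψ => .or φ.toE ψ.toE
  | .X φ => .X φ.toE
  | .U φ ψ => .U φ.toE ψ.toE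
  | .W φ ψ => .W φ.toE ψ.toE

def sat {AP ι : Type} (T : ι → Trace AP) (τ : ℕ → ι → ℕ) (φ : Formula AP) : Prop :=
  esat T τ φ.toE

def satE {AP ι : Type} (T : ι → Trace AP) (φ : Formula AP) : Prop :=
  ∃ τ : ℕ → ι → ℕ, IsTef τ ∧ Initial τ ∧ sat T τ φ

def satA {AP ι : Type} (T : ι → Trace AP) (φ : Formula AP) : Prop :=
  ∀ τ : ℕ → ι → ℕ, IsTef τ → Initial τ → sat T τ φ

def satS {AP ι : Type} (T : ι → Trace AP) (φ : Formula AP) : Prop :=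
  sat T (fun n _ => n) φ

/-- The team T_o over AP ∪ {o}: the fresh proposition o (here: none) is added
at exactly the even positions of every trace. -/
def addO {AP ι : Type} (T : ι → Trace AP) : ι → Trace (Option AP) :=
  fun i n => {x | (∃ p, x = some p ∧ p ∈ T i n) ∨ (x = none ∧ Even n)}

/-- Mapping a plain formula along a renaming of atomic propositions. -/
def Formula.map {AP AP' : Type} (f : AP → AP') : Formula AP → Formula AP'
  | .atom p => .atom (f p)
  | .natom p => .natom (f p)
  | .and φ ψ => .and (φ.map f) (ψ.map f)
  | .or φ ψ => .or (φ.map f) (ψ.map f)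
  | .X φ => .X (φ.map f)
  | .U φ ψ => .U (φ.map f) (ψ.map f)
  | .W φ ψ => .W (φ.map f) (ψ.map f)
/-- Propositional formulas over AP. -/
inductive PropForm (AP : Type) : Type
  | atom : AP → PropForm AP
  | not : PropForm AP → PropForm AP
  | and : PropForm AP → PropForm AP → PropForm AP
  | or : PropForm AP → PropForm AP → PropForm AP

/-- Classical truth value of a propositional formula in a valuation. -/
def pval {AP : Type} (v : Set AP) : PropForm AP → Prop
  | .atom p => p ∈ v
  | .not φ => ¬ pval v φ
  | .and φ ψ => pval v φ ∧ pval v ψ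
  | .or φ ψ => pval v φ ∨ pval v ψ

/-- The formula does not use the non-emptiness atom NE. -/
def NEFree {AP : Type} : EFormula AP → Prop
  | .atom _ => True
  | .natom _ => True
  | .and φ ψ => NEFree φ ∧ NEFree ψ
  | .or φ ψ => NEFree φ ∧ NEFree ψ
  | .bor φ ψ => NEFree φ ∧ NEFree ψ
  | .NE => False
  | .A1 φ => NEFree φ
  | .X φ => NEFree φ
  | .U φ ψ => NEFree φ ∧ NEFree ψ
  | .W φ ψ => NEFree φ ∧ NEFree ψ

/-- A state predicate is expressible when some NE-free formula expresses it flatly. -/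
def FlatExpr {AP : Type} (Q : Set AP → Prop) : Prop :=
  ∃ φ : EFormula AP, NEFree φ ∧ ∀ (ι : Type) (T : ι → Trace AP) (τ : ℕ → ι → ℕ),
    esat T τ φ ↔ ∀ i, Q (T i (τ 0 i))

theorem FlatExpr.and {AP : Type} {P Q : Set AP → Prop} (hP : FlatExpr P) (hQ : FlatExpr Q) :
    FlatExpr (fun s => P s ∧ Q s) := by
  obtain ⟨φ, h1, h2⟩ := hP
  obtain ⟨ψ, h3, h4⟩ := hQ
  refine ⟨.and φ ψ, ⟨h1, h3⟩, fun ι T τ => ?_⟩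
  simp only [esat]
  rw [h2, h4, forall_and]

theorem FlatExpr.or {AP : Type} {P Q : Set AP → Prop} (hP : FlatExpr P) (hQ : FlatExpr Q) :
    FlatExpr (fun s => P s ∨ Q s) := by
  obtain ⟨φ, h1, h2⟩ := hP
  obtain ⟨ψ, h3, h4⟩ := hQ
  refine ⟨.or φ ψ, ⟨h1, h3⟩, fun ι T τ => ?_⟩
  simp only [esat, h2, h4]
  constructor
  · rintro ⟨R, ha, hb⟩ i
    by_cases h : R i
    · exact Or.inl (ha ⟨i, h⟩)
    · exact Or.inr (hb ⟨i, h⟩)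
  · intro h
    refine ⟨fun i => P (T i (τ 0 i)), fun i => i.2, fun i => (h i.1).resolve_left i.2⟩

theorem FlatExpr.congr {AP : Type} {P Q : Set AP → Prop} (hP : FlatExpr P)
    (h : ∀ s, P s ↔ Q s) : FlatExpr Q := by
  have : P = Q := funext fun s => propext (h s)
  exact this ▸ hP

theorem flatExpr_atom {AP : Type} (p : AP) : FlatExpr (fun s : Set AP => p ∈ s) :=
  ⟨.atom p, trivial, fun ι T τ => by simp only [esat]⟩

theorem flatExpr_natom {AP : Type} (p : AP) : FlatExpr (fun s : Set AP => p ∉ s) :=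
  ⟨.natom p, trivial, fun ι T τ => by simp only [esat]⟩

theorem flatExpr_pval {AP : Type} (a : PropForm AP) :
    FlatExpr (fun s : Set AP => pval s a) ∧ FlatExpr (fun s : Set AP => ¬ pval s a) := by
  induction a with
  | atom p => exact ⟨flatExpr_atom p, flatExpr_natom p⟩
  | not a ih => exact ⟨ih.2, ih.1.congr fun s => by simp [pval]⟩
  | and a b iha ihb =>
    exact ⟨iha.1.and ihb.1, (iha.2.or ihb.2).congr fun s => by simp only [pval]; tauto⟩
  | or a b iha ihb =>
    exact ⟨iha.1.or ihb.1, (iha.2.and ihb.2).congr fun s => by simp only [pval]; tauto⟩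

/-- Every downward closed generalised atom is expressible in TeamLTL(⩔, A¹),
without the non-emptiness atom NE. -/
theorem downward_closed_generalized_atom_expressible (AP : Type) (n : ℕ)
    (hn : 1 ≤ n) (B : Set (Set (Fin n → Prop)))
    (hB : ∀ S R : Set (Fin n → Prop), S ⊆ R → R ∈ B → S ∈ B)
    (α : Fin n → PropForm AP) :
    ∃ ψ : EFormula AP, NEFree ψ ∧
      ∀ (ι : Type) (T : ι → Trace AP) (τ : ℕ → ι → ℕ), IsTef τ →
        (esat T τ ψ ↔
          {v : Fin n → Prop | ∃ i : ι, v = fun j => pval (T i (τ 0 i)) (α j)} ∈ B) := by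
  have h0 := flatExpr_pval (α ⟨0, hn⟩)
  have hF : FlatExpr (fun _ : Set AP => False) := (h0.1.and h0.2).congr fun s => by tauto
  have hT : FlatExpr (fun _ : Set AP => True) := (h0.1.or h0.2).congr fun s => by tauto
  have hvec : ∀ a : Fin n → Prop, FlatExpr (fun s => (fun j => pval s (α j)) = a) := by
    intro a
    have key : ∀ J : Finset (Fin n), FlatExpr (fun s => ∀ j ∈ J, (pval s (α j) ↔ a j)) := by
      intro J
      induction J using Finset.induction_on with
      | empty => exact hT.congr fun s => by simp
      | insert k J hk ih =>
        have hl : FlatExpr (fun s => pval s (α k) ↔ a k) := by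
          by_cases h : a k
          · exact (flatExpr_pval (α k)).1.congr fun s => by simp [h]
          · exact (flatExpr_pval (α k)).2.congr fun s => by simp [h]
        exact (hl.and ih).congr fun s => by simp
    exact (key Finset.univ).congr fun s => by simp [funext_iff]
  have hR : ∀ R : Set (Fin n → Prop), FlatExpr (fun s => (fun j => pval s (α j)) ∈ R) := by
    intro R
    induction R, R.toFinite using Set.Finite.induction_on with
    | empty => exact hF.congr fun s => by simp
    | @insert a R _ _ ih => exact ((hvec a).or ih).congr fun s => by simp
  have hC : ∀ C : Set (Set (Fin n → Prop)), ∃ ψ : EFormula AP, NEFree ψ ∧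
      ∀ (ι : Type) (T : ι → Trace AP) (τ : ℕ → ι → ℕ), Nonempty ι →
        (esat T τ ψ ↔ ∃ R ∈ C, ∀ i, (fun j => pval (T i (τ 0 i)) (α j)) ∈ R) := by
    intro C
    induction C, C.toFinite using Set.Finite.induction_on with
    | empty =>
      obtain ⟨φ, h1, h2⟩ := hF
      exact ⟨φ, h1, fun ι T τ hι => by rw [h2]; simp⟩
    | @insert R C _ _ ih =>
      obtain ⟨φ, h1, h2⟩ := hR R
      obtain ⟨ψ, h3, h4⟩ := ih
      refine ⟨.bor φ ψ, ⟨h1, h3⟩, fun ι T τ hι => ?_⟩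
      simp only [esat]
      rw [h2, h4 ι T τ hι, Set.exists_mem_insert]
  obtain ⟨ψ, h1, h2⟩ := hC B
  refine ⟨ψ, h1, fun ι T τ hτ => ?_⟩
  have hι : Nonempty ι := by
    by_contra h
    rw [not_nonempty_iff] at h
    exact hτ.2.1 0 (Subsingleton.elim _ _)
  rw [h2 ι T τ hι]
  constructor
  · rintro ⟨R, hRB, h⟩
    refine hB _ R ?_ hRB
    rintro v ⟨i, rfl⟩
    exact h i
  · intro h
    exact ⟨_, h, fun i => ⟨i, rfl⟩⟩

end TTS
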